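/- Define F̃_p(U,U^r)(t,x) := −(f′(U(t,x)+U^r(t,x)) − f′(U^r(t,x)))·∂_x U^r(t,x) − f′(U(t,x)+U^r(t,x))·∂_x U(t,x). Then both: (a) ∫₀^∞ ( ∫_ℝ |F̃_p(U,U^r)(t,x)| dx )^{(3p+1)/(3p)} dt < ∞, and (b) ∫₀^∞ ∫_ℝ (∂_x U(t,x) + ∂_x U^r(t,x))^{p−1} (∂_x U^r(t,x))² dx dt < ∞. -/

import Mathlib

open Real MeasureTheory Filter Set

/-- The smooth monotone initial datum `w₀(x) = (w₋+w₊)/2 + ((w₊−w₋)/2)·tanh x`. -/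
noncomputable def w0 (wm wp x : ℝ) : ℝ := (wm + wp) / 2 + ((wp - wm) / 2) * Real.tanh x

/-- The Barenblatt-type profile `v(t,x) = t^{-1/(p+1)} (max(A - B(x t^{-1/(p+1)})², 0))^{1/(p-1)}`,
the spatial derivative of the contact wave for `p`-Laplacian type viscosity. -/
noncomputable def vfun (p A B t x : ℝ) : ℝ :=
  t ^ (-(1:ℝ)/(p+1)) * (max (A - B * (x * t ^ (-(1:ℝ)/(p+1)))^2) 0) ^ ((1:ℝ)/(p-1))

lemma aux_H (G G' : ℝ → ℝ) (X : ℝ) (hG : ∀ x, HasDerivAt G (G' x) x)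
    (hpos : ∀ x, x < X → 0 ≤ G' x) (hlow : ∀ x, 0 ≤ G x) :
    ∫⁻ x in Set.Iio X, ENNReal.ofReal (G' x) ≤ ENNReal.ofReal (G X) := by
  have hcont : Continuous G := continuous_iff_continuousAt.2 fun x => (hG x).continuousAt
  have hU : Set.Iio X = ⋃ n : ℕ, Set.Ioo (X - n) X := by
    ext x
    simp only [Set.mem_Iio, Set.mem_iUnion, Set.mem_Ioo]
    constructor
    · intro h
      obtain ⟨n, hn⟩ := exists_nat_gt (X - x)
      exact ⟨n, by linarith, h⟩
    · rintro ⟨n, _, h⟩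
      exact h
  rw [hU, setLIntegral_iUnion_of_directed]
  · refine iSup_le fun n => ?_
    have hle : X - (n:ℝ) ≤ X := by
      have : (0:ℝ) ≤ n := Nat.cast_nonneg n
      linarith
    have hint : IntegrableOn G' (Set.Ioc (X - n) X) :=
      intervalIntegral.integrableOn_deriv_of_nonneg hcont.continuousOn
        (fun x _ => hG x) (fun x hx => hpos x hx.2)
    have h1 : ∫ x in (X - n)..X, G' x = G X - G (X - n) :=
      intervalIntegral.integral_eq_sub_of_hasDerivAt (fun x _ => hG x)
        ((intervalIntegrable_iff_integrableOn_Ioc_of_le hle).2 hint)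
    rw [intervalIntegral.integral_of_le hle, integral_Ioc_eq_integral_Ioo] at h1
    have hint2 : IntegrableOn G' (Set.Ioo (X - n) X) := hint.mono_set Set.Ioo_subset_Ioc_self
    rw [← ofReal_integral_eq_lintegral_ofReal hint2, h1]
    · apply ENNReal.ofReal_le_ofReal
      linarith [hlow (X - n)]
    · filter_upwards [ae_restrict_mem measurableSet_Ioo] with x hx
      exact hpos x hx.2
  · apply Monotone.directed_le
    intro m n hmn x hx
    have : (m:ℝ) ≤ n := by exact_mod_cast hmn
    exact ⟨by linarith [hx.1], hx.2⟩

lemma aux_H2 (G G' : ℝ → ℝ) (K : ℝ) (hG : ∀ x, HasDerivAt G (G' x) x)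
    (hpos : ∀ x, 0 ≤ G' x) (hlow : ∀ x, 0 ≤ G x) (hK : ∀ x, G x ≤ K) :
    ∫⁻ x, ENNReal.ofReal (G' x) ≤ ENNReal.ofReal K := by
  have hU : (Set.univ : Set ℝ) = ⋃ n : ℕ, Set.Iio (n:ℝ) := by
    ext x
    simp only [Set.mem_univ, Set.mem_iUnion, Set.mem_Iio, true_iff]
    exact exists_nat_gt x
  rw [← setLIntegral_univ, hU, setLIntegral_iUnion_of_directed]
  · refine iSup_le fun n => ?_
    exact (aux_H G G' n hG (fun x _ => hpos x) hlow).trans (ENNReal.ofReal_le_ofReal (hK _))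
  · apply Monotone.directed_le
    intro m n hmn x hx
    have : (m:ℝ) ≤ n := by exact_mod_cast hmn
    exact lt_of_lt_of_le hx this

lemma aux_tanh (x : ℝ) : HasDerivAt Real.tanh (1 - Real.tanh x ^ 2) x := by
  have h := (Real.hasDerivAt_sinh x).div (Real.hasDerivAt_cosh x) (Real.cosh_pos x).ne'
  have he : (Real.sinh / Real.cosh) = Real.tanh := by
    funext y; simp [Real.tanh_eq_sinh_div_cosh]
  rw [he] at h
  have h2 : 1 - Real.tanh x ^ 2
      = (Real.cosh x * Real.cosh x - Real.sinh x * Real.sinh x) / Real.cosh x ^ 2 := by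
    rw [Real.tanh_eq_sinh_div_cosh]
    have := (Real.cosh_pos x).ne'
    field_simp
  rw [h2]
  exact h

lemma aux_w0_deriv (L x : ℝ) : HasDerivAt (w0 0 L) (L / 2 * (1 - Real.tanh x ^ 2)) x := by
  have h := ((aux_tanh x).const_mul (L/2)).const_add (L/2)
  have h2 : w0 0 L = fun x => L / 2 + L / 2 * Real.tanh x := by
    funext y
    simp [w0]
  rw [h2]
  exact h

lemma aux_tanh_sq (x : ℝ) : 0 < 1 - Real.tanh x ^ 2 ∧ 1 - Real.tanh x ^ 2 ≤ 1 := by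
  have h1 := Real.tanh_lt_one x
  have h2 := Real.neg_one_lt_tanh x
  constructor <;> nlinarith [sq_nonneg (Real.tanh x)]

lemma aux_w0_mem (L x : ℝ) (hL : 0 < L) : 0 < w0 0 L x ∧ w0 0 L x < L := by
  have h1 := Real.tanh_lt_one x
  have h2 := Real.neg_one_lt_tanh x
  simp only [w0]
  constructor <;> nlinarith

lemma aux_w0_mono (L : ℝ) (hL : 0 < L) : StrictMono (w0 0 L) := by
  apply strictMono_of_deriv_pos
  intro x
  rw [(aux_w0_deriv L x).deriv]
  have := (aux_tanh_sq x).1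
  positivity

lemma aux_w0_decay (L y : ℝ) (hL : 0 < L) : -y * w0 0 L y ≤ L / 2 := by
  rcases le_or_gt 0 y with h | h
  · have := (aux_w0_mem L y hL).1
    nlinarith
  · have h1 : -y * (1 + Real.tanh y) ≤ 1 := by
      rw [Real.tanh_eq]
      have e1 := Real.exp_pos y
      have e2 := Real.exp_pos (-y)
      have e3 : Real.exp (-y) = Real.exp y * Real.exp (-(2*y)) := by
        rw [← Real.exp_add]; congr 1; ring
      have e4 := Real.add_one_le_exp (-(2*y))
      have : 1 + (Real.exp y - Real.exp (-y)) / (Real.exp y + Real.exp (-y))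
          = 2 * Real.exp y / (Real.exp y + Real.exp (-y)) := by
        field_simp; ring
      rw [this, ← mul_div_assoc, div_le_one (by positivity), e3]
      nlinarith
    simp only [w0]
    nlinarith

/-- Facts about the characteristic map. -/
lemma aux_Y (L t : ℝ) (hL : 0 < L) (ht : 0 ≤ t) (y : ℝ → ℝ)
    (hy : ∀ x, y x + t * w0 0 L (y x) = x) :
    StrictMono y ∧ ∀ x, HasDerivAt y (1 + t * (L / 2 * (1 - Real.tanh (y x) ^ 2)))⁻¹ x := by
  have hm := aux_w0_mono L hL
  have hsm : StrictMono y := by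
    intro a b hab
    by_contra! h
    have h1 := hy a
    have h2 := hy b
    have h3 := hm.monotone h
    nlinarith
  have hlip : ∀ a b, a ≤ b → y b - y a ≤ b - a := by
    intro a b hab
    have h1 := hy a
    have h2 := hy b
    have h3 := hm.monotone (hsm.monotone hab)
    nlinarith
  have hcont : Continuous y := by
    have : LipschitzWith 1 y := by
      apply LipschitzWith.of_le_add
      intro a b
      rw [Real.dist_eq]
      rcases le_total a b with h | h
      · have := hsm.monotone h
        have := abs_nonneg (a - b)
        linarith
      · have := hlip b a h
        have := le_abs_self (a - b)
        linarith
    exact this.continuous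
  refine ⟨hsm, fun x => ?_⟩
  have hd : HasDerivAt (fun z => z + t * w0 0 L z)
      (1 + t * (L / 2 * (1 - Real.tanh (y x) ^ 2))) (y x) :=
    (hasDerivAt_id _).add ((aux_w0_deriv L (y x)).const_mul t)
  refine HasDerivAt.of_local_left_inverse hcont.continuousAt hd ?_ (Eventually.of_forall hy)
  have := (aux_tanh_sq (y x)).1
  positivity

/-- Facts about the derivative of the flux. -/
lemma aux_lam (up : ℝ) (hup : 0 < up)
    (f : ℝ → ℝ) (hf1 : ContDiff ℝ 1 f) (hf3 : ContDiffOn ℝ 3 f (Set.Ici 0))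
    (hfzero : ∀ u : ℝ, u ≤ 0 → f u = 0)
    (hconv : ∀ u : ℝ, 0 ≤ u →
      0 < derivWithin (derivWithin f (Set.Ici 0)) (Set.Ici 0) u) :
    Continuous (deriv f) ∧ (∀ u, u ≤ 0 → deriv f u = 0) ∧
    ∃ c : ℝ, 0 < c ∧ (∀ u v, 0 ≤ u → u ≤ v → v ≤ up → c * (v - u) ≤ deriv f v - deriv f u) ∧
      (∀ u, 0 < u → u ≤ up → ∃ d, c ≤ d ∧ HasDerivAt (deriv f) d u) := by
  have hcont : Continuous (deriv f) := hf1.continuous_deriv le_rfl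
  have hdiff : Differentiable ℝ f := hf1.differentiable one_ne_zero
  have hneg : ∀ u, u < 0 → deriv f u = 0 := by
    intro u hu
    have : f =ᶠ[nhds u] fun _ => 0 := by
      filter_upwards [Iio_mem_nhds hu] with z hz
      exact hfzero z (le_of_lt hz)
    rw [this.deriv_eq]
    simp
  have hz : ∀ u, u ≤ 0 → deriv f u = 0 := by
    have hcl : IsClosed {u | deriv f u = 0} := isClosed_eq hcont continuous_const
    have hsub : Set.Iio (0:ℝ) ⊆ {u | deriv f u = 0} := fun u hu => hneg u hu
    have := hcl.closure_subset_iff.2 hsub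
    rw [closure_Iio] at this
    exact fun u hu => this hu
  have hud : UniqueDiffOn ℝ (Set.Ici (0:ℝ)) := uniqueDiffOn_Ici 0
  have heq : ∀ u ∈ Set.Ici (0:ℝ), derivWithin f (Set.Ici 0) u = deriv f u := by
    intro u hu
    exact (hdiff u).derivWithin (hud u hu)
  have hC2 : ContDiffOn ℝ 2 (derivWithin f (Set.Ici 0)) (Set.Ici 0) :=
    hf3.derivWithin hud (by norm_num)
  have hC1 : ContDiffOn ℝ 1 (derivWithin (derivWithin f (Set.Ici 0)) (Set.Ici 0)) (Set.Ici 0) :=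
    hC2.derivWithin hud (by norm_num)
  obtain ⟨u0, hu0, hmin⟩ := isCompact_Icc.exists_isMinOn (Set.nonempty_Icc.2 hup.le)
    (hC1.continuousOn.mono (Set.Icc_subset_Ici_self : Set.Icc 0 up ⊆ Set.Ici 0))
  set c := derivWithin (derivWithin f (Set.Ici 0)) (Set.Ici 0) u0 with hc
  have hder : ∀ u, 0 < u → u ≤ up → ∃ d, c ≤ d ∧ HasDerivAt (deriv f) d u := by
    intro u hu hu'
    refine ⟨_, hmin ⟨hu.le, hu'⟩, ?_⟩
    have hD := (hC2.differentiableOn two_ne_zero u hu.le).hasDerivWithinAt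
    have hD2 := hD.hasDerivAt (Ici_mem_nhds hu)
    refine hD2.congr_of_eventuallyEq ?_
    filter_upwards [Ici_mem_nhds hu] with z hz
    exact (heq z hz).symm
  refine ⟨hcont, hz, c, hconv u0 hu0.1, ?_, hder⟩
  intro u v hu huv hv
  apply Convex.mul_sub_le_image_sub_of_le_deriv (convex_Icc 0 up) hcont.continuousOn
  · rw [interior_Icc]
    intro x hx
    obtain ⟨d, _, hd⟩ := hder x hx.1 hx.2.le
    exact hd.differentiableAt.differentiableWithinAt
  · rw [interior_Icc]
    intro x hx
    obtain ⟨d, hcd, hd⟩ := hder x hx.1 hx.2.le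
    rw [hd.deriv]; exact hcd
  · exact ⟨hu, huv.trans hv⟩
  · exact ⟨hu.trans huv, hv⟩
  · exact huv

lemma aux_Ur (up c t : ℝ) (hup : 0 < up) (hc : 0 < c) (ht : 0 ≤ t) (l linv : ℝ → ℝ)
    (hl : Continuous l) (hl0 : l 0 = 0)
    (hlc : ∀ u v, 0 ≤ u → u ≤ v → v ≤ up → c * (v - u) ≤ l v - l u)
    (hld : ∀ u, 0 < u → u ≤ up → ∃ d, c ≤ d ∧ HasDerivAt l d u)
    (hlinv : ∀ u ∈ Set.Icc (0:ℝ) up, linv (l u) = u)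
    (y : ℝ → ℝ) (hy : ∀ x, y x + t * w0 0 (l up) (y x) = x) :
    ∃ D : ℝ → ℝ, (∀ x, HasDerivAt (fun z => linv (w0 0 (l up) (y z))) (D x) x) ∧
      (∀ x, 0 ≤ D x) ∧ (∀ x, D x ≤ (l up / 2 + 1) / c / (1 + t)) ∧
      (∀ x, 0 < linv (w0 0 (l up) (y x)) ∧ linv (w0 0 (l up) (y x)) < up ∧
        l (linv (w0 0 (l up) (y x))) = w0 0 (l up) (y x)) := by
  have hL : 0 < l up := by
    have := hlc 0 up le_rfl hup.le le_rfl
    rw [hl0] at this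
    nlinarith
  set L := l up with hLdef
  obtain ⟨hym, hyd⟩ := aux_Y L t hL ht y hy
  have hli : ∀ r, 0 < r → r < L → 0 < linv r ∧ linv r < up ∧ l (linv r) = r := by
    intro r h0 h1
    have hmem : r ∈ Set.Ioo (l 0) (l up) := by rw [hl0]; exact ⟨h0, h1⟩
    obtain ⟨u, hu, rfl⟩ := intermediate_value_Ioo hup.le hl.continuousOn hmem
    rw [hlinv u ⟨hu.1.le, hu.2.le⟩]
    exact ⟨hu.1, hu.2, rfl⟩
  have hlip : ∀ r s, 0 < r → r < L → 0 < s → s < L → |linv r - linv s| ≤ c⁻¹ * |r - s| := by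
    intro r s hr hr' hs hs'
    obtain ⟨a1, a2, a3⟩ := hli r hr hr'
    obtain ⟨b1, b2, b3⟩ := hli s hs hs'
    rw [inv_mul_eq_div, le_div_iff₀ hc, mul_comm]
    rcases le_total (linv r) (linv s) with h | h
    · have := hlc _ _ a1.le h b2.le
      rw [a3, b3] at this
      rw [abs_sub_comm, abs_of_nonneg (by linarith)]
      have := neg_le_abs (r - s)
      linarith
    · have := hlc _ _ b1.le h a2.le
      rw [a3, b3] at this
      rw [abs_of_nonneg (by linarith)]
      have := le_abs_self (r - s)
      linarith
  have hlc' : ∀ r, 0 < r → r < L → ContinuousAt linv r := by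
    intro r hr hr'
    rw [ContinuousAt, tendsto_iff_norm_sub_tendsto_zero]
    have h0 : Tendsto (fun s => c⁻¹ * |s - r|) (nhds r) (nhds 0) := by
      have : Continuous (fun s : ℝ => c⁻¹ * |s - r|) := by fun_prop
      have h := this.tendsto r
      simpa using h
    refine squeeze_zero' (Eventually.of_forall fun _ => norm_nonneg _) ?_ h0
    filter_upwards [Ioo_mem_nhds hr hr'] with s hs
    exact hlip s r hs.1 hs.2 hr hr'
  have hder : ∀ x, ∃ D, HasDerivAt (fun z => linv (w0 0 L (y z))) D x ∧ 0 ≤ D ∧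
      D ≤ (L / 2 + 1) / c / (1 + t) := by
    intro x
    obtain ⟨w1, w2⟩ := aux_w0_mem L (y x) hL
    obtain ⟨a1, a2, a3⟩ := hli _ w1 w2
    obtain ⟨d, hcd, hd⟩ := hld _ a1 a2.le
    have hdpos : 0 < d := hc.trans_le hcd
    have h1 : HasDerivAt linv d⁻¹ (w0 0 L (y x)) := by
      refine HasDerivAt.of_local_left_inverse (hlc' _ w1 w2) hd hdpos.ne' ?_
      filter_upwards [Ioo_mem_nhds w1 w2] with s hs
      exact (hli s hs.1 hs.2).2.2
    have h2 := h1.comp x ((aux_w0_deriv L (y x)).comp x (hyd x))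
    have hq := aux_tanh_sq (y x)
    set q := L / 2 * (1 - Real.tanh (y x) ^ 2) with hqdef
    have hq0 : 0 < q := by have := hq.1; positivity
    have hq1 : q ≤ L / 2 := by
      rw [hqdef]; nlinarith [hq.2]
    refine ⟨_, h2, by positivity, ?_⟩
    have e1 : q * (1 + t * q)⁻¹ ≤ (L / 2 + 1) / (1 + t) := by
      rw [← div_eq_mul_inv, div_le_div_iff₀ (by positivity) (by positivity)]
      nlinarith [mul_nonneg ht hq0.le, mul_nonneg (mul_nonneg ht hq0.le) hL.le]
    have e2 : d⁻¹ ≤ c⁻¹ := inv_anti₀ hc hcd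
    calc d⁻¹ * (q * (1 + t * q)⁻¹) ≤ c⁻¹ * ((L / 2 + 1) / (1 + t)) := by
          apply mul_le_mul e2 e1 (by positivity) (by positivity)
      _ = _ := by field_simp
  choose D h1 h2 h3 using hder
  refine ⟨D, h1, h2, h3, fun x => ?_⟩
  obtain ⟨w1, w2⟩ := aux_w0_mem L (y x) hL
  exact hli _ w1 w2

/-- Facts about the contact wave at a fixed time (with `1 + t` called `T`). -/
lemma aux_v (p A B T : ℝ) (hp : 1 < p) (hA : 0 < A) (hB : 0 < B) (hT : 0 < T) :
    Continuous (vfun p A B T) ∧ (∀ x, 0 ≤ vfun p A B T x) ∧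
    (∀ x, vfun p A B T x ≤ A ^ ((1:ℝ)/(p-1)) * T ^ (-(1:ℝ)/(p+1))) ∧
    (∀ x, Real.sqrt (A / B) * T ^ ((1:ℝ)/(p+1)) ≤ |x| → vfun p A B T x = 0) := by
  have hexp : 0 < (1:ℝ)/(p-1) := by
    have : 0 < p - 1 := by linarith
    positivity
  have hTp : 0 < T ^ (-(1:ℝ)/(p+1)) := Real.rpow_pos_of_pos hT _
  refine ⟨?_, ?_, ?_, ?_⟩
  · unfold vfun
    refine continuous_const.mul (Continuous.rpow_const (by fun_prop) ?_)
    intro x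
    right; exact hexp.le
  · intro x
    unfold vfun
    have : 0 ≤ max (A - B * (x * T ^ (-(1:ℝ)/(p+1)))^2) 0 := le_max_right _ _
    positivity
  · intro x
    unfold vfun
    rw [mul_comm]
    apply mul_le_mul_of_nonneg_right _ hTp.le
    apply Real.rpow_le_rpow (le_max_right _ _) _ hexp.le
    apply max_le _ hA.le
    have : 0 ≤ B * (x * T ^ (-(1:ℝ)/(p+1)))^2 := by positivity
    linarith
  · intro x hx
    unfold vfun
    have h1 : Real.sqrt (A / B) ≤ |x * T ^ (-(1:ℝ)/(p+1))| := by
      rw [abs_mul, abs_of_pos hTp]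
      calc Real.sqrt (A / B) = Real.sqrt (A / B) * T ^ ((1:ℝ)/(p+1)) * T ^ (-(1:ℝ)/(p+1)) := by
            rw [mul_assoc, ← Real.rpow_add hT]
            rw [show (1:ℝ)/(p+1) + -(1:ℝ)/(p+1) = 0 by ring, Real.rpow_zero, mul_one]
        _ ≤ _ := mul_le_mul_of_nonneg_right hx hTp.le
    have h2 : A / B ≤ (x * T ^ (-(1:ℝ)/(p+1)))^2 := by
      rw [← sq_abs]
      exact (Real.sqrt_le_left (abs_nonneg _)).1 h1
    have h3 : A ≤ B * (x * T ^ (-(1:ℝ)/(p+1)))^2 := by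
      rw [div_le_iff₀ hB] at h2; linarith
    rw [max_eq_right (by linarith), Real.zero_rpow hexp.ne', mul_zero]

lemma aux_mass (p A B T : ℝ) (hp : 1 < p) (hA : 0 < A) (hB : 0 < B) (hT : 0 < T) :
    ∫ x in (-(Real.sqrt (A / B) * T ^ ((1:ℝ)/(p+1))))..(Real.sqrt (A / B) * T ^ ((1:ℝ)/(p+1))),
      vfun p A B T x =
    2 * A ^ ((p+1)/(2*(p-1))) * B ^ (-(1:ℝ)/2) *
      (∫ θ in (0:ℝ)..(Real.pi/2), Real.sin θ ^ ((p+1)/(p-1))) := by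
  obtain ⟨hc, -, -, -⟩ := aux_v p A B T hp hA hB hT
  have hp1 : 0 < p - 1 := by linarith
  set X := Real.sqrt (A / B) * T ^ ((1:ℝ)/(p+1)) with hX
  have hneg : ∀ x, vfun p A B T (-x) = vfun p A B T x := by
    intro x; unfold vfun; congr 3; ring
  have hhalf : ∫ x in (-X)..0, vfun p A B T x = ∫ x in (0:ℝ)..X, vfun p A B T x := by
    have := intervalIntegral.integral_comp_neg (a := 0) (b := X) (vfun p A B T)
    simp only [hneg, neg_zero] at this
    exact this.symm
  have hsub := intervalIntegral.integral_comp_mul_deriv (a := 0) (b := Real.pi/2)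
    (f := fun θ => -(X * Real.cos θ)) (f' := fun θ => X * Real.sin θ) (g := vfun p A B T)
    (fun θ _ => by
      have := ((Real.hasDerivAt_cos θ).const_mul X).neg
      have h2 : -(X * -Real.sin θ) = X * Real.sin θ := by ring
      rw [h2] at this
      exact this) (by fun_prop) hc
  simp only [Real.cos_zero, mul_one, Real.cos_pi_div_two, mul_zero, neg_zero] at hsub
  rw [← intervalIntegral.integral_add_adjacent_intervals (b := 0) (hc.intervalIntegrable _ _)
    (hc.intervalIntegrable _ _), ← hhalf, ← hsub]
  have hK : ∫ θ in (0:ℝ)..(Real.pi/2),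
      (vfun p A B T ∘ fun θ => -(X * Real.cos θ)) θ * (X * Real.sin θ) =
      ∫ θ in (0:ℝ)..(Real.pi/2), A ^ ((p+1)/(2*(p-1))) * B ^ (-(1:ℝ)/2) *
        Real.sin θ ^ ((p+1)/(p-1)) := by
    apply intervalIntegral.integral_congr
    intro θ hθ
    rw [Set.uIcc_of_le (by positivity)] at hθ
    have hs : 0 ≤ Real.sin θ := Real.sin_nonneg_of_nonneg_of_le_pi hθ.1
      (by linarith [hθ.2, Real.pi_pos])
    have hTT : T ^ ((1:ℝ)/(p+1)) * T ^ (-(1:ℝ)/(p+1)) = 1 := by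
      rw [← Real.rpow_add hT, show (1:ℝ)/(p+1) + -(1:ℝ)/(p+1) = 0 by ring, Real.rpow_zero]
    have hsq : Real.sqrt (A / B) ^ 2 = A / B := Real.sq_sqrt (by positivity)
    have e1 : A - B * (-(X * Real.cos θ) * T ^ (-(1:ℝ)/(p+1)))^2 = A * Real.sin θ ^ 2 := by
      have : -(X * Real.cos θ) * T ^ (-(1:ℝ)/(p+1))
          = -(Real.sqrt (A / B) * Real.cos θ *
            (T ^ ((1:ℝ)/(p+1)) * T ^ (-(1:ℝ)/(p+1)))) := by
        rw [hX]; ring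
      rw [this, hTT, mul_one, neg_sq, mul_pow, hsq, Real.cos_sq']
      field_simp
      ring
    simp only [Function.comp_apply]
    unfold vfun
    rw [e1, max_eq_left (by positivity), Real.mul_rpow hA.le (by positivity)]
    have e2 : (Real.sin θ ^ 2) ^ ((1:ℝ)/(p-1)) * Real.sin θ = Real.sin θ ^ ((p+1)/(p-1)) := by
      rcases hs.eq_or_lt with h | h
      · rw [← h, mul_zero, Real.zero_rpow]
        have : 0 < (p+1)/(p-1) := by positivity
        exact this.ne'
      · rw [← Real.rpow_natCast, ← Real.rpow_mul hs]
        nth_rewrite 2 [← Real.rpow_one (Real.sin θ)]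
        rw [← Real.rpow_add h]
        congr 1
        push_cast
        field_simp
        ring
    have e3 : A ^ ((1:ℝ)/(p-1)) * Real.sqrt (A / B) = A ^ ((p+1)/(2*(p-1))) * B ^ (-(1:ℝ)/2) := by
      rw [Real.sqrt_div hA.le, Real.sqrt_eq_rpow, Real.sqrt_eq_rpow, div_eq_mul_inv (A ^ _),
        ← Real.rpow_neg hB.le, ← mul_assoc, ← Real.rpow_add hA]
      congr 2
      · field_simp
        ring
      · ring
    calc _ = (A ^ ((1:ℝ)/(p-1)) * Real.sqrt (A / B)) *
          ((Real.sin θ ^ 2) ^ ((1:ℝ)/(p-1)) * Real.sin θ) *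
          (T ^ ((1:ℝ)/(p+1)) * T ^ (-(1:ℝ)/(p+1))) := by rw [hX]; ring
      _ = _ := by rw [hTT, e2, e3, mul_one]
  rw [hK, intervalIntegral.integral_const_mul]
  ring

lemma aux_U (p A B T um : ℝ) (hp : 1 < p) (hA : 0 < A) (hB : 0 < B) (hT : 0 < T)
    (hnorm : 2 * A ^ ((p+1)/(2*(p-1))) * B ^ (-(1:ℝ)/2) *
      (∫ θ in (0:ℝ)..(Real.pi/2), Real.sin θ ^ ((p+1)/(p-1))) = -um) :
    (∀ x, HasDerivAt (fun x => um + ∫ y in Set.Iio x, vfun p A B T y) (vfun p A B T x) x) ∧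
    (∀ x, um + ∫ y in Set.Iio x, vfun p A B T y ≤ 0) ∧
    (∀ x, Real.sqrt (A / B) * T ^ ((1:ℝ)/(p+1)) ≤ x →
      um + ∫ y in Set.Iio x, vfun p A B T y = 0) := by
  obtain ⟨hc, hpos, -, hz⟩ := aux_v p A B T hp hA hB hT
  have hmass := aux_mass p A B T hp hA hB hT
  rw [hnorm] at hmass
  set X := Real.sqrt (A / B) * T ^ ((1:ℝ)/(p+1)) with hX
  have hX0 : 0 ≤ X := by positivity
  have key : ∀ x, um + ∫ y in Set.Iio x, vfun p A B T y =
      um + ∫ y in (-X)..x, vfun p A B T y := by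
    intro x
    have hIic : ∀ x, IntegrableOn (vfun p A B T) (Set.Iic x) := by
      intro x
      have : Integrable (vfun p A B T) := by
        apply hc.integrable_of_hasCompactSupport
        apply HasCompactSupport.intro (isCompact_Icc (a := -X) (b := X))
        intro z hzz
        apply hz
        by_contra! h
        exact hzz ⟨(abs_lt.1 h).1.le, (abs_lt.1 h).2.le⟩
      exact this.integrableOn
    have h0 : ∫ y in Set.Iic (-X), vfun p A B T y = 0 := by
      apply setIntegral_eq_zero_of_forall_eq_zero
      intro z hzz
      apply hz
      have hz2 : z ≤ -X := hzz
      rw [abs_of_nonpos (by linarith)]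
      linarith
    rw [← intervalIntegral.integral_Iic_sub_Iic (hIic _) (hIic _), h0, sub_zero,
      integral_Iic_eq_integral_Iio]
  have hd : ∀ x, HasDerivAt (fun x => um + ∫ y in Set.Iio x, vfun p A B T y)
      (vfun p A B T x) x := by
    intro x
    have : (fun x => um + ∫ y in Set.Iio x, vfun p A B T y) =
      fun x => um + ∫ y in (-X)..x, vfun p A B T y := funext key
    rw [this]
    exact (hc.integral_hasStrictDerivAt (-X) x).hasDerivAt.const_add um
  have hge : ∀ x, X ≤ x → um + ∫ y in Set.Iio x, vfun p A B T y = 0 := by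
    intro x hx
    rw [key, ← intervalIntegral.integral_add_adjacent_intervals (b := X)
      (hc.intervalIntegrable _ _) (hc.intervalIntegrable _ _), hmass]
    have : ∫ y in X..x, vfun p A B T y = 0 := by
      rw [intervalIntegral.integral_congr (g := fun _ => (0:ℝ))]
      · simp
      · intro z hzz
        rw [Set.uIcc_of_le hx] at hzz
        exact hz z (hzz.1.trans (le_abs_self z))
    rw [this]; ring
  refine ⟨hd, fun x => ?_, hge⟩
  have hmono : Monotone (fun x => um + ∫ y in Set.Iio x, vfun p A B T y) :=
    monotone_of_deriv_nonneg (fun x => (hd x).differentiableAt)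
      (fun x => by rw [(hd x).deriv]; exact hpos x)
  have h1 := hmono (le_max_left x X)
  have h2 := hge (max x X) (le_max_right x X)
  simp only at h1
  linarith

lemma aux_decay (p L s t y X w : ℝ) (hp : 1 < p) (hL : 0 < L) (hs : 0 ≤ s) (ht : 0 ≤ t)
    (hX : X = s * (1 + t) ^ ((1:ℝ)/(p+1))) (hw : w = w0 0 L y) (hy : y + t * w0 0 L y = X) :
    w ^ 2 ≤ (s ^ 2 + L + 2 * L ^ 2) / (1 + t) := by
  have hdec := aux_w0_decay L y hL
  obtain ⟨w1, w2⟩ := aux_w0_mem L y hL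
  rw [← hw] at hdec w1 w2 hy
  have hT : 1 ≤ 1 + t := by linarith
  have hX2 : X ≤ s * Real.sqrt (1 + t) := by
    rw [hX, Real.sqrt_eq_rpow]
    apply mul_le_mul_of_nonneg_left _ hs
    apply Real.rpow_le_rpow_of_exponent_le hT
    apply one_div_le_one_div_of_le <;> linarith
  have hsq : Real.sqrt (1 + t) ^ 2 = 1 + t := Real.sq_sqrt (by linarith)
  rw [le_div_iff₀ (by linarith)]
  have h1 : t * w ^ 2 ≤ X * w + L / 2 := by nlinarith
  have h2 : X * w ≤ s * Real.sqrt (1 + t) * w := mul_le_mul_of_nonneg_right hX2 w1.le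
  have h3 : w ^ 2 ≤ L ^ 2 := by nlinarith
  have h4 : (Real.sqrt (1 + t) * w) ^ 2 = (1 + t) * w ^ 2 := by rw [mul_pow, hsq]
  nlinarith [sq_nonneg (s - Real.sqrt (1 + t) * w)]

/-- A power of `1 + t` integrable at infinity. -/
lemma aux_tail (K q : ℝ) (hq : 1 < q) :
    ∫⁻ t in Set.Ioi (0:ℝ), ENNReal.ofReal (K * (1 + t) ^ (-q)) < ⊤ := by
  have h : IntegrableOn (fun t : ℝ => (t + 1) ^ (-q)) (Set.Ioi 0) :=
    integrableOn_add_rpow_Ioi_of_lt (by linarith) (by norm_num)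
  have h2 := (h.const_mul K).lintegral_lt_top
  simpa [add_comm] using h2

lemma aux_main (p μ um up A B : ℝ)
    (hp : 1 < p) (hμ : 0 < μ) (hup : 0 < up)
    (f : ℝ → ℝ) (hf1 : ContDiff ℝ 1 f) (hf3 : ContDiffOn ℝ 3 f (Set.Ici 0))
    (hfzero : ∀ u : ℝ, u ≤ 0 → f u = 0)
    (hconv : ∀ u : ℝ, 0 ≤ u →
      0 < derivWithin (derivWithin f (Set.Ici 0)) (Set.Ici 0) u)
    (linv : ℝ → ℝ) (hlinv : ∀ u ∈ Set.Icc (0:ℝ) up, linv (deriv f u) = u)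
    (Y : ℝ → ℝ → ℝ)
    (hY : ∀ t x : ℝ, 0 ≤ t → Y t x + t * w0 0 (deriv f up) (Y t x) = x)
    (hB : B = (p - 1) / (2 * μ * p * (p + 1))) (hA : 0 < A)
    (hnorm : 2 * A ^ ((p+1)/(2*(p-1))) * B ^ (-(1:ℝ)/2) *
      (∫ θ in (0:ℝ)..(Real.pi/2), Real.sin θ ^ ((p+1)/(p-1))) = -um)
    (Ur U : ℝ → ℝ → ℝ)
    (hUr : Ur = fun t x => linv (w0 0 (deriv f up) (Y t x)))
    (hU : U = fun t x => um + ∫ y in Set.Iio x, vfun p A B (1 + t) y) :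
    (∃ K, ∀ t, 0 ≤ t → ∫⁻ x : ℝ, ENNReal.ofReal
      |-((deriv f (U t x + Ur t x) - deriv f (Ur t x)) * deriv (fun y => Ur t y) x)
        - deriv f (U t x + Ur t x) * deriv (fun y => U t y) x|
        ≤ ENNReal.ofReal (K * (1 + t)⁻¹)) ∧
    (∃ K, ∀ t, 0 ≤ t → ∫⁻ x : ℝ,
        ENNReal.ofReal ((deriv (fun y => U t y) x + deriv (fun y => Ur t y) x) ^ (p-1)
          * (deriv (fun y => Ur t y) x) ^ 2)
        ≤ ENNReal.ofReal (K * (1 + t) ^ (-(1 + (p - 1) / (p + 1))))) := by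
  have hp1 : 0 < p - 1 := by linarith
  have hB0 : 0 < B := by rw [hB]; positivity
  obtain ⟨hcont, hz, c, hc, hlc, hld⟩ := aux_lam up hup f hf1 hf3 hfzero hconv
  have hdf : ∀ u, HasDerivAt f (deriv f u) u := fun u =>
    (hf1.differentiable one_ne_zero u).hasDerivAt
  set l := deriv f with hl
  have hl0 : l 0 = 0 := hz 0 le_rfl
  have hmono : ∀ u v, u ≤ v → v ≤ up → l u ≤ l v := by
    intro u v huv hv
    rcases le_total v 0 with h | h
    · rw [hz u (huv.trans h), hz v h]
    rcases le_total u 0 with h' | h'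
    · have := hlc 0 v le_rfl h hv
      rw [hl0] at this
      rw [hz u h']
      have : 0 ≤ c * (v - 0) := by rw [sub_zero]; positivity
      linarith
    · have := hlc u v h' huv hv
      have : 0 ≤ c * (v - u) := mul_nonneg hc.le (by linarith)
      linarith
  have hnonneg : ∀ u, u ≤ up → 0 ≤ l u := by
    intro u hu
    rcases le_total u 0 with h | h
    · exact (hz u h).ge
    · have := hmono 0 u h hu
      rwa [hl0] at this
  have hf_nonneg : ∀ u, u ≤ up → 0 ≤ f u := by
    intro u hu
    rcases le_total u 0 with h | h
    · exact (hfzero u h).ge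
    · have := Convex.mul_sub_le_image_sub_of_le_deriv (convex_Icc 0 u)
        hf1.continuous.continuousOn (hf1.differentiable one_ne_zero).differentiableOn
        (C := 0) (fun x hx => by
          rw [interior_Icc] at hx
          exact hnonneg x (hx.2.le.trans hu)) 0 ⟨le_rfl, h⟩ u ⟨h, le_rfl⟩ h
      rw [hfzero 0 le_rfl] at this
      linarith
  have hf_le : ∀ u, 0 ≤ u → u ≤ up → f u ≤ l u ^ 2 / c := by
    intro u h hu
    have h1 := Convex.image_sub_le_mul_sub_of_deriv_le (convex_Icc 0 u)
        hf1.continuous.continuousOn (hf1.differentiable one_ne_zero).differentiableOn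
        (C := l u) (fun x hx => by
          rw [interior_Icc] at hx
          exact hmono x u hx.2.le hu) 0 ⟨le_rfl, h⟩ u ⟨h, le_rfl⟩ h
    rw [hfzero 0 le_rfl, sub_zero, sub_zero] at h1
    have h2 := hlc 0 u le_rfl h hu
    rw [hl0, sub_zero, sub_zero] at h2
    have h3 := hnonneg u hu
    rw [le_div_iff₀ hc]
    nlinarith
  have hL : 0 < l up := by
    have := hlc 0 up le_rfl hup.le le_rfl
    rw [hl0] at this
    nlinarith
  have hD := fun t (ht : 0 ≤ t) => aux_Ur up c t hup hc ht l linv hcont hl0 hlc hld hlinv (Y t)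
    (fun x => hY t x ht)
  constructor
  · refine ⟨2 * ((Real.sqrt (A / B)) ^ 2 + l up + 2 * l up ^ 2) / c, fun t ht => ?_⟩
    obtain ⟨D, hD1, hD2, -, hD4⟩ := hD t ht
    have hT : 0 < 1 + t := by linarith
    obtain ⟨hU1, hU2, hU3⟩ := aux_U p A B (1 + t) um hp hA hB0 hT hnorm
    obtain ⟨-, hv1, -, hv3⟩ := aux_v p A B (1 + t) hp hA hB0 hT
    have eUr : (fun z => linv (w0 0 (l up) (Y t z))) = Ur t := by rw [hUr]
    have eU : (fun x => um + ∫ y in Set.Iio x, vfun p A B (1 + t) y) = U t := by rw [hU]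
    rw [eUr] at hD1
    rw [eU] at hU1
    replace hU2 : ∀ x, U t x ≤ 0 := fun x => by rw [← eU]; exact hU2 x
    replace hU3 : ∀ x, Real.sqrt (A / B) * (1 + t) ^ ((1:ℝ)/(p+1)) ≤ x → U t x = 0 :=
      fun x hx => by rw [← eU]; exact hU3 x hx
    replace hD4 : ∀ x, 0 < Ur t x ∧ Ur t x < up ∧ l (Ur t x) = w0 0 (l up) (Y t x) :=
      fun x => by rw [← eUr]; exact hD4 x
    have dUr : ∀ x, deriv (fun y => Ur t y) x = D x := fun x => (hD1 x).deriv
    have dU : ∀ x, deriv (fun y => U t y) x = vfun p A B (1 + t) x := fun x => (hU1 x).deriv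
    have mUr : Monotone (Ur t) := monotone_of_deriv_nonneg (fun x => (hD1 x).differentiableAt)
      (fun x => by rw [(hD1 x).deriv]; exact hD2 x)
    set X := Real.sqrt (A / B) * (1 + t) ^ ((1:ℝ)/(p+1)) with hX
    set M := Ur t X with hM
    simp only [dUr, dU]
    set v := vfun p A B (1 + t) with hv
    have hMup : M ≤ up := (hD4 X).2.1.le
    have hpt : ∀ x, ENNReal.ofReal |-((l (U t x + Ur t x) - l (Ur t x)) * D x)
        - l (U t x + Ur t x) * v x| ≤ (Set.Iio X).indicator
        (fun x => ENNReal.ofReal (l (Ur t x) * D x + l (U t x + M) * v x)) x := by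
      intro x
      rcases lt_or_ge x X with h | h
      · rw [Set.indicator_of_mem (show x ∈ Set.Iio X from h)]
        apply ENNReal.ofReal_le_ofReal
        have a1 : l (U t x + Ur t x) ≤ l (Ur t x) :=
          hmono _ _ (by linarith [hU2 x]) (hD4 x).2.1.le
        have a2 : 0 ≤ l (U t x + Ur t x) := hnonneg _ (by linarith [hU2 x, (hD4 x).2.1])
        have a3 : l (U t x + Ur t x) ≤ l (U t x + M) :=
          hmono _ _ (by linarith [mUr h.le]) (by linarith [hU2 x])
        have b1 := hD2 x
        have b2 := hv1 x
        have c1 : l (U t x + Ur t x) * v x ≤ l (U t x + M) * v x :=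
          mul_le_mul_of_nonneg_right a3 b2
        have c2 : 0 ≤ l (U t x + Ur t x) * v x := mul_nonneg a2 b2
        have c3 : 0 ≤ l (U t x + Ur t x) * D x := mul_nonneg a2 b1
        have c4 : l (U t x + Ur t x) * D x ≤ l (Ur t x) * D x :=
          mul_le_mul_of_nonneg_right a1 b1
        rw [abs_le]
        constructor <;> nlinarith
      · rw [Set.indicator_of_notMem (show x ∉ Set.Iio X from not_lt.2 h)]
        rw [hU3 x h, hv3 x (h.trans (le_abs_self x))]
        simp
    refine (lintegral_mono hpt).trans ?_
    rw [lintegral_indicator measurableSet_Iio]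
    have hG := aux_H (fun x => f (Ur t x) + f (U t x + M))
      (fun x => l (Ur t x) * D x + l (U t x + M) * v x) X
      (fun x => ((hdf _).comp x (hD1 x)).add ((hdf _).comp x ((hU1 x).add_const M)))
      (fun x _ => add_nonneg (mul_nonneg (hnonneg _ (hD4 x).2.1.le) (hD2 x))
        (mul_nonneg (hnonneg _ (by linarith [hU2 x])) (hv1 x)))
      (fun x => add_nonneg (hf_nonneg _ (hD4 x).2.1.le)
        (hf_nonneg _ (by linarith [hU2 x])))
    refine hG.trans ?_
    apply ENNReal.ofReal_le_ofReal
    rw [hU3 X le_rfl, zero_add, ← hM]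
    have k1 := hf_le M (hD4 X).1.le hMup
    have k2 := aux_decay p (l up) (Real.sqrt (A / B)) t (Y t X) X (l M) hp hL
      (Real.sqrt_nonneg _) ht hX (hD4 X).2.2 (hY t X ht)
    have k3 : l M ^ 2 / c ≤ (Real.sqrt (A / B) ^ 2 + l up + 2 * l up ^ 2) / (1 + t) / c :=
      div_le_div_of_nonneg_right k2 hc.le
    have k4 : 2 * (Real.sqrt (A / B) ^ 2 + l up + 2 * l up ^ 2) / c * (1 + t)⁻¹
        = 2 * ((Real.sqrt (A / B) ^ 2 + l up + 2 * l up ^ 2) / (1 + t) / c) := by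
      field_simp
    rw [k4]
    linarith
  · set a := A ^ ((1:ℝ)/(p-1)) with ha
    set b := (l up / 2 + 1) / c with hb
    have ha0 : 0 < a := Real.rpow_pos_of_pos hA _
    have hb0 : 0 < b := by positivity
    refine ⟨(a + b) ^ (p - 1) * b * up, fun t ht => ?_⟩
    obtain ⟨D, hD1, hD2, hD3, hD4⟩ := hD t ht
    have hT : 0 < 1 + t := by linarith
    obtain ⟨hU1, -, -⟩ := aux_U p A B (1 + t) um hp hA hB0 hT hnorm
    obtain ⟨-, hv1, hv2, -⟩ := aux_v p A B (1 + t) hp hA hB0 hT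
    have eUr : (fun z => linv (w0 0 (l up) (Y t z))) = Ur t := by rw [hUr]
    have eU : (fun x => um + ∫ y in Set.Iio x, vfun p A B (1 + t) y) = U t := by rw [hU]
    rw [eUr] at hD1
    rw [eU] at hU1
    replace hD4 : ∀ x, 0 < Ur t x ∧ Ur t x < up ∧ l (Ur t x) = w0 0 (l up) (Y t x) :=
      fun x => by rw [← eUr]; exact hD4 x
    have dUr : ∀ x, deriv (fun y => Ur t y) x = D x := fun x => (hD1 x).deriv
    have dU : ∀ x, deriv (fun y => U t y) x = vfun p A B (1 + t) x := fun x => (hU1 x).deriv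
    simp only [dUr, dU]
    set v := vfun p A B (1 + t) with hv
    set S := (1 + t) ^ (-(1:ℝ)/(p+1)) with hS
    have hS0 : 0 < S := Real.rpow_pos_of_pos hT _
    have hTS : (1 + t)⁻¹ ≤ S := by
      rw [← Real.rpow_neg_one, hS]
      apply Real.rpow_le_rpow_of_exponent_le (by linarith)
      rw [le_div_iff₀ (by linarith)]
      linarith
    have hSp : S ^ (p - 1) * (1 + t)⁻¹ = (1 + t) ^ (-(1 + (p - 1) / (p + 1))) := by
      rw [hS, ← Real.rpow_mul hT.le, ← Real.rpow_neg_one, ← Real.rpow_add hT]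
      congr 1
      field_simp
      ring
    set C := (a + b) ^ (p - 1) * b * (1 + t) ^ (-(1 + (p - 1) / (p + 1))) with hC
    have hC0 : 0 ≤ C := by positivity
    have hpt : ∀ x, ENNReal.ofReal ((v x + D x) ^ (p - 1) * D x ^ 2) ≤
        ENNReal.ofReal C * ENNReal.ofReal (D x) := by
      intro x
      rw [← ENNReal.ofReal_mul hC0]
      apply ENNReal.ofReal_le_ofReal
      have b1 := hD2 x
      have b2 := hv1 x
      have b3 : D x ≤ b * (1 + t)⁻¹ := by rw [← div_eq_mul_inv]; exact hD3 x
      have b4 : v x + D x ≤ (a + b) * S := by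
        have := hv2 x
        have : b * (1 + t)⁻¹ ≤ b * S := mul_le_mul_of_nonneg_left hTS hb0.le
        rw [add_mul]
        linarith
      have b5 : (v x + D x) ^ (p - 1) ≤ (a + b) ^ (p - 1) * S ^ (p - 1) := by
        rw [← Real.mul_rpow (by positivity) hS0.le]
        exact Real.rpow_le_rpow (by positivity) b4 hp1.le
      calc (v x + D x) ^ (p - 1) * D x ^ 2 = (v x + D x) ^ (p - 1) * D x * D x := by ring
        _ ≤ (a + b) ^ (p - 1) * S ^ (p - 1) * (b * (1 + t)⁻¹) * D x := by gcongr
        _ = C * D x := by rw [hC, ← hSp]; ring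
    refine (lintegral_mono hpt).trans ?_
    rw [lintegral_const_mul' _ _ ENNReal.ofReal_ne_top]
    have hG := aux_H2 (Ur t) D up hD1 hD2 (fun x => (hD4 x).1.le) (fun x => (hD4 x).2.1.le)
    calc _ ≤ ENNReal.ofReal C * ENNReal.ofReal up := by gcongr
      _ = ENNReal.ofReal (C * up) := (ENNReal.ofReal_mul hC0).symm
      _ = _ := by congr 1; rw [hC]; ring

theorem stmt_8 (p μ um up A B : ℝ)
    (hp : 1 < p) (hμ : 0 < μ) (hum : um < 0) (hup : 0 < up)
    (f : ℝ → ℝ) (hf1 : ContDiff ℝ 1 f) (hf3 : ContDiffOn ℝ 3 f (Set.Ici 0))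
    (hfzero : ∀ u : ℝ, u ≤ 0 → f u = 0)
    (hconv : ∀ u : ℝ, 0 ≤ u →
      0 < derivWithin (derivWithin f (Set.Ici 0)) (Set.Ici 0) u)
    (linv : ℝ → ℝ) (hlinv : ∀ u ∈ Set.Icc (0:ℝ) up, linv (deriv f u) = u)
    (Y : ℝ → ℝ → ℝ)
    (hY : ∀ t x : ℝ, 0 ≤ t → Y t x + t * w0 0 (deriv f up) (Y t x) = x)
    (hB : B = (p - 1) / (2 * μ * p * (p + 1))) (hA : 0 < A)
    (hnorm : 2 * A ^ ((p+1)/(2*(p-1))) * B ^ (-(1:ℝ)/2) *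
      (∫ θ in (0:ℝ)..(Real.pi/2), Real.sin θ ^ ((p+1)/(p-1))) = -um) :
    -- `Ur` is the smooth approximate rarefaction wave connecting `0` to `u₊`,
    -- `U` is the viscous contact wave connecting `u₋` to `0`.
    let Ur : ℝ → ℝ → ℝ := fun t x => linv (w0 0 (deriv f up) (Y t x))
    let U : ℝ → ℝ → ℝ := fun t x => um + ∫ y in Set.Iio x, vfun p A B (1 + t) y
    let F : ℝ → ℝ → ℝ := fun t x =>
      -((deriv f (U t x + Ur t x) - deriv f (Ur t x)) * deriv (fun y => Ur t y) x)
        - deriv f (U t x + Ur t x) * deriv (fun y => U t y) x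
    (∫⁻ t in Set.Ioi (0:ℝ),
        (∫⁻ x : ℝ, ENNReal.ofReal |F t x|) ^ ((3*p+1)/(3*p))) < ⊤ ∧
    (∫⁻ t in Set.Ioi (0:ℝ), ∫⁻ x : ℝ,
        ENNReal.ofReal ((deriv (fun y => U t y) x + deriv (fun y => Ur t y) x) ^ (p-1)
          * (deriv (fun y => Ur t y) x) ^ 2)) < ⊤ := by
  intro Ur U F
  obtain ⟨⟨K, hK⟩, ⟨K', hK'⟩⟩ := aux_main p μ um up A B hp hμ hup f hf1 hf3 hfzero hconv linv
    hlinv Y hY hB hA hnorm Ur U rfl rfl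
  constructor
  · have hq : 1 < (3*p+1)/(3*p) := by
      rw [lt_div_iff₀ (by linarith)]; linarith
    refine lt_of_le_of_lt ?_ (aux_tail (max K 0 ^ ((3*p+1)/(3*p))) _ hq)
    refine setLIntegral_mono' measurableSet_Ioi fun t ht => ?_
    have ht0 : 0 ≤ t := le_of_lt ht
    have hT : 0 < 1 + t := by linarith
    have hm : 0 ≤ max K 0 := le_max_right _ _
    have h1 : ∫⁻ x : ℝ, ENNReal.ofReal |F t x| ≤ ENNReal.ofReal (max K 0 * (1 + t)⁻¹) := by
      refine (hK t ht0).trans (ENNReal.ofReal_le_ofReal ?_)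
      exact mul_le_mul_of_nonneg_right (le_max_left _ _) (by positivity)
    calc _ ≤ ENNReal.ofReal (max K 0 * (1 + t)⁻¹) ^ ((3*p+1)/(3*p)) :=
          ENNReal.rpow_le_rpow h1 (by linarith)
      _ = ENNReal.ofReal ((max K 0 * (1 + t)⁻¹) ^ ((3*p+1)/(3*p))) :=
          ENNReal.ofReal_rpow_of_nonneg (by positivity) (by linarith)
      _ = _ := by
          rw [Real.mul_rpow hm (by positivity), Real.inv_rpow hT.le, Real.rpow_neg hT.le]
  · have hq : 1 < 1 + (p - 1) / (p + 1) := by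
      have : 0 < (p - 1) / (p + 1) := div_pos (by linarith) (by linarith)
      linarith
    refine lt_of_le_of_lt ?_ (aux_tail K' _ hq)
    exact setLIntegral_mono' measurableSet_Ioi fun t ht => hK' t (le_of_lt ht)
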